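/- arXiv:2510.04417 — 5 statements merged into one kernel-verified Lean document; each statement's English description precedes it below -/
import Mathlib

section
/- Invariance of the PID synergy optimization under componentwise measurable equivalences (Corollary 4.2): let p be a probability measure on 𝒳₁ × 𝒳₂ × 𝒴, let Δ_p be the set of probability measures on 𝒳₁ × 𝒳₂ × 𝒴 with the same (𝒳₁ × 𝒴)- and (𝒳₂ × 𝒴)-marginals as p, let f₁, f₂, f_Y be measurable equivalences of 𝒳₁, 𝒳₂, 𝒴 respectively, and let p̂ := (f₁ × f₂ × f_Y)_* p. Then inf_{q ∈ Δ_p} I₍₁₂₎,Y(q) = inf_{q̂ ∈ Δ_{p̂}} I₍₁₂₎,Y(q̂), where for a measure q on 𝒳₁ × 𝒳₂ × 𝒴, I₍₁₂₎,Y(q) := KL(q ‖ q₁₂ ⊗ q_Y) is the mutual information between the (𝒳₁ × 𝒳₂)-coordinates and the 𝒴-coordinate, q₁₂ being the marginal of q on 𝒳₁ × 𝒳₂ and q_Y its marginal on 𝒴. -/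
/-!
A measurable equivalence `e` preserves absolute continuity and carries Radon–Nikodym derivatives to
Radon–Nikodym derivatives, so `KL(e_* P ‖ e_* Q) = KL(P ‖ Q)` (`klDiv_map_measurableEquiv`). The
pushforward along a product equivalence commutes with taking marginals and products, so mutual
information is unchanged (`mutualInfo_map_prodCongr`, `mi₁₂Y_map_prodCongr`). The same commutation
shows that pushing forward by `f₁ × f₂ × f_Y` sends `Δ_p` into `Δ_{p̂}` (`map_mem_marginalSet`).
Hence the infimum over `Δ_{p̂}` is at most that over `Δ_p`, and the reverse inequality is the same
fact for the inverse equivalences.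
-/

open MeasureTheory

open Classical in
/-- Kullback–Leibler divergence `KL(P ‖ Q)`, valued in `EReal`. -/
noncomputable def klDiv {α : Type*} [MeasurableSpace α] (P Q : Measure α) : EReal :=
  if P ≪ Q ∧ Integrable (fun x => Real.log (P.rnDeriv Q x).toReal) P
  then ((∫ x, Real.log (P.rnDeriv Q x).toReal ∂P : ℝ) : EReal)
  else ⊤

/-- Mutual information of a measure on a product space: `I(P) := KL(P ‖ P₁ ⊗ P₂)`. -/
noncomputable def mutualInfo {α β : Type*} [MeasurableSpace α] [MeasurableSpace β]
    (P : Measure (α × β)) : EReal :=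
  klDiv P ((P.map Prod.fst).prod (P.map Prod.snd))

/-- `I₍₁₂₎,Y(q) := KL(q ‖ q₁₂ ⊗ q_Y)`: the mutual information between the
`(𝒳₁ × 𝒳₂)`-coordinates jointly and the `𝒴`-coordinate of a measure on `𝒳₁ × 𝒳₂ × 𝒴`. -/
noncomputable def mi₁₂Y {X₁ X₂ Y : Type*} [MeasurableSpace X₁] [MeasurableSpace X₂]
    [MeasurableSpace Y] (q : Measure (X₁ × X₂ × Y)) : EReal :=
  mutualInfo (q.map fun z => ((z.1, z.2.1), z.2.2))

/-- `Δ_p`: the set of probability measures on `𝒳₁ × 𝒳₂ × 𝒴` having the same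
`(𝒳₁ × 𝒴)`- and `(𝒳₂ × 𝒴)`-marginals as `p`. -/
def marginalSet {X₁ X₂ Y : Type*} [MeasurableSpace X₁] [MeasurableSpace X₂]
    [MeasurableSpace Y] (p : Measure (X₁ × X₂ × Y)) : Set (Measure (X₁ × X₂ × Y)) :=
  {q | IsProbabilityMeasure q ∧
    q.map (fun z => (z.1, z.2.2)) = p.map (fun z => (z.1, z.2.2)) ∧
    q.map (fun z => (z.2.1, z.2.2)) = p.map (fun z => (z.2.1, z.2.2))}

theorem klDiv_map_measurableEquiv {α β : Type*} [MeasurableSpace α] [MeasurableSpace β]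
    (e : α ≃ᵐ β) (P Q : Measure α) [SigmaFinite P] [SigmaFinite Q] :
    klDiv (P.map e) (Q.map e) = klDiv P Q := by
  have hac : P.map e ≪ Q.map e ↔ P ≪ Q := by
    refine ⟨fun h => ?_, fun h => h.map e.measurable⟩
    have h' := h.map e.symm.measurable
    rwa [e.map_symm_map, e.map_symm_map] at h'
  by_cases h : P ≪ Q
  · have hlog : (fun x => Real.log ((P.map e).rnDeriv (Q.map e) (e x)).toReal)
        =ᵐ[P] fun x => Real.log (P.rnDeriv Q x).toReal := by
      filter_upwards [h.ae_le (e.measurableEmbedding.rnDeriv_map P Q)] with x hx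
      rw [hx]
    have hintegrable : Integrable (fun y => Real.log ((P.map e).rnDeriv (Q.map e) y).toReal) (P.map e)
        ↔ Integrable (fun x => Real.log (P.rnDeriv Q x).toReal) P := by
      rw [e.measurableEmbedding.integrable_map_iff]
      exact integrable_congr hlog
    unfold klDiv
    rw [hac, hintegrable, e.measurableEmbedding.integral_map, integral_congr_ae hlog]
  · unfold klDiv
    rw [if_neg fun h' => h (hac.1 h'.1), if_neg fun h' => h h'.1]

theorem mutualInfo_map_prodCongr {α β α' β' : Type*} [MeasurableSpace α] [MeasurableSpace β]
    [MeasurableSpace α'] [MeasurableSpace β'] (e : α ≃ᵐ α') (f : β ≃ᵐ β')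
    (P : Measure (α × β)) [IsProbabilityMeasure P] :
    mutualInfo (P.map (e.prodCongr f)) = mutualInfo P := by
  have : IsProbabilityMeasure (P.map Prod.fst) :=
    Measure.isProbabilityMeasure_map measurable_fst.aemeasurable
  have : IsProbabilityMeasure (P.map Prod.snd) :=
    Measure.isProbabilityMeasure_map measurable_snd.aemeasurable
  have h₁ : (P.map (e.prodCongr f)).map Prod.fst = (P.map Prod.fst).map e := by
    rw [Measure.map_map measurable_fst (e.prodCongr f).measurable,
      Measure.map_map e.measurable measurable_fst]
    rfl
  have h₂ : (P.map (e.prodCongr f)).map Prod.snd = (P.map Prod.snd).map f := by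
    rw [Measure.map_map measurable_snd (e.prodCongr f).measurable,
      Measure.map_map f.measurable measurable_snd]
    rfl
  unfold mutualInfo
  rw [h₁, h₂, Measure.map_prod_map _ _ e.measurable f.measurable]
  exact klDiv_map_measurableEquiv (e.prodCongr f) P _

section Triple

variable {X₁ X₂ Y X₁' X₂' Y' : Type*}
  [MeasurableSpace X₁] [MeasurableSpace X₂] [MeasurableSpace Y]
  [MeasurableSpace X₁'] [MeasurableSpace X₂'] [MeasurableSpace Y']

theorem mi₁₂Y_map_prodCongr (f₁ : X₁ ≃ᵐ X₁') (f₂ : X₂ ≃ᵐ X₂') (fY : Y ≃ᵐ Y')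
    (q : Measure (X₁ × X₂ × Y)) [IsProbabilityMeasure q] :
    mi₁₂Y (q.map (f₁.prodCongr (f₂.prodCongr fY))) = mi₁₂Y q := by
  have hm : Measurable fun z : X₁ × X₂ × Y => ((z.1, z.2.1), z.2.2) := by fun_prop
  have hm' : Measurable fun z : X₁' × X₂' × Y' => ((z.1, z.2.1), z.2.2) := by fun_prop
  have : IsProbabilityMeasure (q.map fun z => ((z.1, z.2.1), z.2.2)) :=
    Measure.isProbabilityMeasure_map hm.aemeasurable
  unfold mi₁₂Y
  rw [← mutualInfo_map_prodCongr (f₁.prodCongr f₂) fY (q.map fun z => ((z.1, z.2.1), z.2.2)),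
    Measure.map_map hm' (MeasurableEquiv.measurable _),
    Measure.map_map (MeasurableEquiv.measurable _) hm]
  rfl

theorem map_mem_marginalSet (f₁ : X₁ ≃ᵐ X₁') (f₂ : X₂ ≃ᵐ X₂') (fY : Y ≃ᵐ Y')
    {p q : Measure (X₁ × X₂ × Y)} (hq : q ∈ marginalSet p) :
    q.map (f₁.prodCongr (f₂.prodCongr fY))
      ∈ marginalSet (p.map (f₁.prodCongr (f₂.prodCongr fY))) := by
  obtain ⟨hprob, h₁, h₂⟩ := hq
  have hF := (f₁.prodCongr (f₂.prodCongr fY)).measurable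
  have comm₁ (r : Measure (X₁ × X₂ × Y)) :
      (r.map (f₁.prodCongr (f₂.prodCongr fY))).map (fun z => (z.1, z.2.2))
        = (r.map fun z => (z.1, z.2.2)).map (f₁.prodCongr fY) := by
    rw [Measure.map_map (by fun_prop) hF,
      Measure.map_map (MeasurableEquiv.measurable _) (by fun_prop)]
    rfl
  have comm₂ (r : Measure (X₁ × X₂ × Y)) :
      (r.map (f₁.prodCongr (f₂.prodCongr fY))).map (fun z => (z.2.1, z.2.2))
        = (r.map fun z => (z.2.1, z.2.2)).map (f₂.prodCongr fY) := by
    rw [Measure.map_map (by fun_prop) hF,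
      Measure.map_map (MeasurableEquiv.measurable _) (by fun_prop)]
    rfl
  refine ⟨Measure.isProbabilityMeasure_map hF.aemeasurable, ?_, ?_⟩
  · rw [comm₁, comm₁, h₁]
  · rw [comm₂, comm₂, h₂]

theorem iInf_mi₁₂Y_map_le (f₁ : X₁ ≃ᵐ X₁') (f₂ : X₂ ≃ᵐ X₂') (fY : Y ≃ᵐ Y')
    (p : Measure (X₁ × X₂ × Y)) :
    (⨅ q ∈ marginalSet (p.map (f₁.prodCongr (f₂.prodCongr fY))), mi₁₂Y q)
      ≤ ⨅ q ∈ marginalSet p, mi₁₂Y q := by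
  refine le_iInf₂ fun q hq => ?_
  have := hq.1
  rw [← mi₁₂Y_map_prodCongr f₁ f₂ fY q]
  exact iInf₂_le _ (map_mem_marginalSet f₁ f₂ fY hq)

end Triple

/-- **Invariance of the PID synergy optimization under componentwise measurable
equivalences** (Corollary 4.2): with `p̂ := (f₁ × f₂ × f_Y)_* p`,
`inf_{q ∈ Δ_p} I₍₁₂₎,Y(q) = inf_{q̂ ∈ Δ_{p̂}} I₍₁₂₎,Y(q̂)`. -/
theorem iInf_mi₁₂Y_invariant_of_measurableEquiv
    {X₁ X₂ Y X₁' X₂' Y' : Type*}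
    [MeasurableSpace X₁] [MeasurableSpace X₂] [MeasurableSpace Y]
    [MeasurableSpace X₁'] [MeasurableSpace X₂'] [MeasurableSpace Y']
    (p : Measure (X₁ × X₂ × Y)) [IsProbabilityMeasure p]
    (f₁ : X₁ ≃ᵐ X₁') (f₂ : X₂ ≃ᵐ X₂') (fY : Y ≃ᵐ Y') :
    (⨅ q ∈ marginalSet p, mi₁₂Y q)
      = ⨅ q ∈ marginalSet (p.map (f₁.prodCongr (f₂.prodCongr fY))), mi₁₂Y q := by
  refine le_antisymm ?_ (iInf_mi₁₂Y_map_le f₁ f₂ fY p)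
  have h := iInf_mi₁₂Y_map_le f₁.symm f₂.symm fY.symm (p.map (f₁.prodCongr (f₂.prodCongr fY)))
  have hp : (p.map (f₁.prodCongr (f₂.prodCongr fY))).map
      (f₁.symm.prodCongr (f₂.symm.prodCongr fY.symm)) = p :=
    (f₁.prodCongr (f₂.prodCongr fY)).map_symm_map
  rwa [hp] at h
end

section
/- Product-of-marginals relative entropy bound (step in the proof of Corollary 4.3): let P and Q be probability measures on a product measurable space α × β with P absolutely continuous with respect to Q. Then KL(P₁ ⊗ P₂ ‖ Q₁ ⊗ Q₂) ≤ 2 · KL(P ‖ Q), where P₁, P₂ (resp. Q₁, Q₂) are the marginals of P (resp. Q) on α and β. -/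
/-!
The divergence is additive over products and decreases under measurable maps. Writing
`P₁ ⊗ P₂` as the composition of `P₁` with the constant kernel `P₂`, the chain rule gives
`KL(P₁ ⊗ P₂ ‖ Q₁ ⊗ Q₂) = KL(P₁ ‖ Q₁) + KL(P₁ ⊗ P₂ ‖ P₁ ⊗ Q₂)`; after swapping the factors, the
last term is at most `KL(P₂ ‖ Q₂)` because both measures use the same constant kernel. The data
processing inequality for the two projections bounds each term by `KL(P ‖ Q)`. The argument runs
with Mathlib's `ℝ≥0∞`-valued divergence, which agrees with `klDiv` on probability measures.
-/

open MeasureTheory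

open ProbabilityTheory

/-- For probability measures the mass correction `ν univ - μ univ` in Mathlib's divergence
vanishes, and Gibbs' inequality makes the truncation `ENNReal.ofReal` harmless. -/
lemma klDiv_eq_coe_informationTheory_klDiv {γ : Type*} [MeasurableSpace γ] (μ ν : Measure γ)
    [IsProbabilityMeasure μ] [IsProbabilityMeasure ν] :
    klDiv μ ν = ((InformationTheory.klDiv μ ν : ENNReal) : EReal) := by
  unfold klDiv
  split_ifs with h
  · have hnn := InformationTheory.integral_llr_add_sub_measure_univ_nonneg h.1 h.2
    have hint : Integrable (llr μ ν) μ := h.2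
    rw [InformationTheory.klDiv_of_ac_of_integrable h.1 hint, EReal.coe_ennreal_ofReal,
      max_eq_left hnn]
    simp [llr]
  · have htop : InformationTheory.klDiv μ ν = ⊤ :=
      InformationTheory.klDiv_eq_top_iff.mpr fun h1 h2 => h ⟨h1, h2⟩
    simp [htop]

lemma informationTheory_klDiv_prod_le {α β : Type*} [MeasurableSpace α] [MeasurableSpace β]
    (μ₁ ν₁ : Measure α) (μ₂ ν₂ : Measure β)
    [IsProbabilityMeasure μ₁] [IsProbabilityMeasure ν₁]
    [IsProbabilityMeasure μ₂] [IsProbabilityMeasure ν₂] :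
    InformationTheory.klDiv (μ₁.prod μ₂) (ν₁.prod ν₂)
      ≤ InformationTheory.klDiv μ₁ ν₁ + InformationTheory.klDiv μ₂ ν₂ := by
  rw [← Measure.compProd_const (μ := μ₁), ← Measure.compProd_const (μ := ν₁),
    InformationTheory.klDiv_compProd_eq_add]
  gcongr
  rw [Measure.compProd_const, Measure.compProd_const, ← Measure.prod_swap (μ := μ₂),
    ← Measure.prod_swap (μ := ν₂)]
  refine (InformationTheory.klDiv_map_le _ _ measurable_swap).trans ?_
  rw [← Measure.compProd_const, ← Measure.compProd_const, InformationTheory.klDiv_compProd_left]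

/-- **Product-of-marginals relative entropy bound** (step in the proof of Corollary 4.3):
if `P ≪ Q` on a product space, then `KL(P₁ ⊗ P₂ ‖ Q₁ ⊗ Q₂) ≤ 2 · KL(P ‖ Q)`. -/
theorem klDiv_prod_marginals_le_two_mul_klDiv
    {α β : Type*} [MeasurableSpace α] [MeasurableSpace β]
    (P Q : Measure (α × β)) [IsProbabilityMeasure P] [IsProbabilityMeasure Q]
    (hac : P ≪ Q) :
    klDiv ((P.map Prod.fst).prod (P.map Prod.snd))
        ((Q.map Prod.fst).prod (Q.map Prod.snd))
      ≤ 2 * klDiv P Q := by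
  have : IsProbabilityMeasure (P.map Prod.fst) :=
    Measure.isProbabilityMeasure_map measurable_fst.aemeasurable
  have : IsProbabilityMeasure (P.map Prod.snd) :=
    Measure.isProbabilityMeasure_map measurable_snd.aemeasurable
  have : IsProbabilityMeasure (Q.map Prod.fst) :=
    Measure.isProbabilityMeasure_map measurable_fst.aemeasurable
  have : IsProbabilityMeasure (Q.map Prod.snd) :=
    Measure.isProbabilityMeasure_map measurable_snd.aemeasurable
  have h : InformationTheory.klDiv ((P.map Prod.fst).prod (P.map Prod.snd))
      ((Q.map Prod.fst).prod (Q.map Prod.snd)) ≤ 2 * InformationTheory.klDiv P Q := by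
    rw [two_mul]
    exact (informationTheory_klDiv_prod_le _ _ _ _).trans
      (add_le_add (InformationTheory.klDiv_map_le _ _ measurable_fst)
        (InformationTheory.klDiv_map_le _ _ measurable_snd))
  rw [klDiv_eq_coe_informationTheory_klDiv, klDiv_eq_coe_informationTheory_klDiv]
  calc _ ≤ ((2 * InformationTheory.klDiv P Q : ENNReal) : EReal) :=
        EReal.coe_ennreal_le_coe_ennreal_iff.mpr h
    _ = 2 * (InformationTheory.klDiv P Q : EReal) := by
        rw [EReal.coe_ennreal_mul]
        rfl
end

section
/- Determinant formula for the mutual information of a jointly Gaussian vector: let Σ be a positive definite real (d_X + d_Y) × (d_X + d_Y) matrix with diagonal blocks Σ_X (size d_X × d_X) and Σ_Y (size d_Y × d_Y), and let P = N(0, Σ) be the centered multivariate Gaussian measure on ℝ^{d_X} × ℝ^{d_Y} with covariance Σ. Then the mutual information between the two coordinate blocks satisfies I(P) = (1/2) · log( det Σ_X · det Σ_Y / det Σ ). -/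
/-!
The marginals of `P = N(0, S)` are `N(0, S₁₁)` and `N(0, S₂₂)` (`map_comp_mvGaussian`). All the
measures involved have positive densities, so the log-likelihood ratio of `P` against the product
of its marginals is the difference of the log-densities. The powers of `2π` cancel, leaving

  `1/2 * log (det S₁₁ * det S₂₂ / det S) + 1/2 * (xᵀ S₁₁⁻¹ x + yᵀ S₂₂⁻¹ y - zᵀ S⁻¹ z)`, `z = (x, y)`.

If `Z ~ N(0, T)` on `ℝ^d` with `T` positive definite, then `Z = T^(1/2) W` with `W` standard
Gaussian, so `Zᵀ T⁻¹ Z = ‖W‖²` has mean `d` (`quadForm_mvGaussian`). The three quadratic terms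
therefore have total mean `dX + dY - (dX + dY) = 0`, and the constant is the mutual information.

The marginals are identified by showing that `mvGaussian 0 T`, which is given by a density, is the
image of the standard Gaussian under `T^(1/2)`, hence equals Mathlib's `multivariateGaussian`; the
latter is determined by its mean and covariance.
-/

open MeasureTheory Matrix

/-- The multivariate Gaussian measure `N(m, S)` on `ι → ℝ`, defined by its density
with respect to Lebesgue measure (the genuine Gaussian measure when `S` is positive
definite). -/
noncomputable def mvGaussian {ι : Type*} [Fintype ι] [DecidableEq ι]
    (m : ι → ℝ) (S : Matrix ι ι ℝ) : Measure (ι → ℝ) :=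
  volume.withDensity fun x =>
    ENNReal.ofReal ((Real.sqrt ((2 * Real.pi) ^ (Fintype.card ι) * S.det))⁻¹ *
      Real.exp (-(1/2) * ((x - m) ⬝ᵥ (S⁻¹ *ᵥ (x - m)))))

open ProbabilityTheory WithLp
open scoped MatrixOrder RealInnerProductSpace

/-! ### Densities of centered Gaussians -/

/-- The real-valued density of the centered Gaussian `N(0, S)`, as it occurs in `mvGaussian 0 S`
(a genuine probability density when `S` is positive definite). -/
noncomputable def gaussDens {ι : Type*} [Fintype ι] [DecidableEq ι]
    (S : Matrix ι ι ℝ) (x : ι → ℝ) : ℝ :=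
  (Real.sqrt ((2 * Real.pi) ^ (Fintype.card ι) * S.det))⁻¹ *
      Real.exp (-(1/2) * (x ⬝ᵥ (S⁻¹ *ᵥ x)))

theorem measurable_mulVec {ι κ : Type*} [Fintype ι] [Fintype κ] (A : Matrix κ ι ℝ) : Measurable (A *ᵥ · : (ι → ℝ) → κ → ℝ) :=
  (by fun_prop : Continuous (A *ᵥ · : (ι → ℝ) → κ → ℝ)).measurable

section
variable {ι κ : Type*} [Fintype ι] [DecidableEq ι] [Fintype κ] [DecidableEq κ]

theorem mvGaussian_eq (S : Matrix ι ι ℝ) :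
    mvGaussian 0 S = volume.withDensity fun x => ENNReal.ofReal (gaussDens S x) := by
  simp [mvGaussian, gaussDens]

theorem continuous_gaussDens (S : Matrix ι ι ℝ) : Continuous (gaussDens S) := by
  unfold gaussDens; fun_prop

theorem gaussDens_pos {S : Matrix ι ι ℝ} (hS : 0 < S.det) (x : ι → ℝ) : 0 < gaussDens S x := by
  unfold gaussDens; positivity

theorem map_withDensity_comp {α β : Type*} [MeasurableSpace α] [MeasurableSpace β]
    (ν : Measure α) {e : α → β} (he : Measurable e) {g : β → ENNReal} (hg : Measurable g) :
    (ν.withDensity fun x => g (e x)).map e = (ν.map e).withDensity g := by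
  ext s hs
  rw [Measure.map_apply he hs, withDensity_apply _ (he hs), withDensity_apply _ hs,
    setLIntegral_map hs hg he]

/-- The density of `N(0, 1)` is the product of the one-dimensional standard Gaussian densities. -/
theorem pi_gaussianReal_eq :
    Measure.pi (fun _ : ι => gaussianReal 0 1) = mvGaussian 0 (1 : Matrix ι ι ℝ) := by
  rw [mvGaussian_eq]
  refine Measure.pi_eq fun s hs => ?_
  have hd : ∀ x : ι → ℝ, gaussDens 1 x = ∏ i, gaussianPDFReal 0 1 (x i) := by
    intro x
    simp only [gaussDens, gaussianPDFReal, Finset.prod_mul_distrib, ← Real.exp_sum, det_one,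
      Finset.prod_const, Finset.card_univ, inv_one, one_mulVec, dotProduct, Finset.mul_sum]
    congr 1
    · rw [mul_one, inv_pow, NNReal.coe_one, mul_one]
      congr 1
      rw [Real.sqrt_eq_iff_eq_sq (by positivity) (by positivity), ← pow_mul, mul_comm _ 2,
        pow_mul, Real.sq_sqrt (by positivity)]
    · congr 1
      refine Finset.sum_congr rfl fun i _ => ?_
      simp; ring
  rw [withDensity_apply _ (MeasurableSet.univ_pi hs), volume_pi, Measure.restrict_pi_pi]
  simp_rw [hd]
  rw [← ofReal_integral_eq_lintegral_ofReal, integral_fintype_prod_eq_prod,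
    ENNReal.ofReal_prod_of_nonneg]
  · refine Finset.prod_congr rfl fun i _ => ?_
    rw [gaussianReal_apply_eq_integral _ (by simp)]
  · intro i _
    exact integral_nonneg fun x => gaussianPDFReal_nonneg _ _ _
  · exact Integrable.fintype_prod fun i => (integrable_gaussianPDFReal 0 1).restrict
  · exact Filter.Eventually.of_forall fun x =>
      Finset.prod_nonneg fun i _ => gaussianPDFReal_nonneg _ _ _

/-- The substitution `y = A x` turns the quadratic form of `N(0, A Aᵀ)` into the Euclidean one. -/
theorem quadForm_mulVec {A : Matrix ι ι ℝ} (hA : A.det ≠ 0) (x : ι → ℝ) :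
    (A *ᵥ x) ⬝ᵥ ((A * Aᵀ)⁻¹ *ᵥ (A *ᵥ x)) = x ⬝ᵥ x := by
  have hAu : IsUnit A.det := hA.isUnit
  rw [Matrix.mul_inv_rev, mulVec_mulVec, Matrix.mul_assoc, nonsing_inv_mul _ hAu, Matrix.mul_one,
    ← transpose_nonsing_inv, mulVec_transpose, dotProduct_comm, ← dotProduct_mulVec,
    mulVec_mulVec, nonsing_inv_mul _ hAu, one_mulVec]

/-- Change of variables: the Jacobian `|det A|` accounts for the change of normalizing constant. -/
theorem map_mulVec_mvGaussian {A : Matrix ι ι ℝ} (hA : A.det ≠ 0) :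
    (mvGaussian 0 (1 : Matrix ι ι ℝ)).map (A *ᵥ ·) = mvGaussian 0 (A * Aᵀ) := by
  have h : ∀ x : ι → ℝ, gaussDens 1 x = |A.det| * gaussDens (A * Aᵀ) (A *ᵥ x) := by
    intro x
    simp only [gaussDens, quadForm_mulVec hA, det_mul, det_transpose, det_one, inv_one, one_mulVec, mul_one]
    rw [Real.sqrt_mul (by positivity), ← pow_two, Real.sqrt_sq_eq_abs]
    have := abs_pos.2 hA
    field_simp
  rw [mvGaussian_eq, mvGaussian_eq]
  simp_rw [h]
  rw [map_withDensity_comp volume (measurable_mulVec A)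
    (g := fun y => ENNReal.ofReal (|A.det| * gaussDens (A * Aᵀ) y))
    ((continuous_gaussDens _).measurable.const_mul _).ennreal_ofReal]
  have := Real.map_matrix_volume_pi_eq_smul_volume_pi hA
  rw [show (A *ᵥ · : (ι → ℝ) → ι → ℝ) = Matrix.toLin' A from by ext; simp, this,
    withDensity_smul_measure]
  simp_rw [ENNReal.ofReal_mul (abs_nonneg A.det)]
  rw [← withDensity_smul _ ((continuous_gaussDens _).measurable.ennreal_ofReal.const_mul _)]
  congr 1
  ext x
  simp only [Pi.smul_apply, smul_eq_mul]
  rw [← mul_assoc, ← ENNReal.ofReal_mul (abs_nonneg _), abs_inv, inv_mul_cancel₀, ENNReal.ofReal_one, one_mul]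
  exact abs_ne_zero.2 hA

/-! ### Whitening and marginals -/

theorem sqrt_det_ne_zero_and_mul_transpose {S : Matrix ι ι ℝ} (hS : S.PosDef) :
    (CFC.sqrt S).det ≠ 0 ∧ CFC.sqrt S * (CFC.sqrt S)ᵀ = S := by
  have h1 : CFC.sqrt S * CFC.sqrt S = S := CFC.sqrt_mul_sqrt_self _ hS.posSemidef.nonneg
  have h2 : (CFC.sqrt S)ᵀ = CFC.sqrt S := by
    have := (CFC.sqrt_nonneg S).isSelfAdjoint.star_eq
    rwa [star_eq_conjTranspose, conjTranspose_eq_transpose_of_trivial] at this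
  refine ⟨fun h => hS.det_pos.ne' ?_, by rw [h2, h1]⟩
  rw [← h1, det_mul, h, zero_mul]

theorem mvGaussian_eq_map_sqrt {S : Matrix ι ι ℝ} (hS : S.PosDef) :
    mvGaussian 0 S =
      (Measure.pi (fun _ : ι => gaussianReal 0 1)).map (CFC.sqrt S *ᵥ ·) := by
  obtain ⟨hd, hs⟩ := sqrt_det_ne_zero_and_mul_transpose hS
  rw [pi_gaussianReal_eq, map_mulVec_mvGaussian hd, hs]

/-- For positive definite `S`, the measure defined by its density agrees with Mathlib's
`multivariateGaussian`, which lives on `EuclideanSpace ℝ ι`. -/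
theorem mvGaussian_eq_map_ofLp {S : Matrix ι ι ℝ} (hS : S.PosDef) :
    mvGaussian 0 S = (multivariateGaussian 0 S).map ofLp := by
  rw [mvGaussian_eq_map_sqrt hS, multivariateGaussian, ← map_pi_eq_stdGaussian,
    Measure.map_map (by fun_prop) (by fun_prop), Measure.map_map (by fun_prop) (by fun_prop)]
  congr 1
  ext x i
  simp

/-- Both sides are Gaussian with the same mean and covariance. The map `f` need not be injective,
since Mathlib's `multivariateGaussian` allows singular covariance matrices. -/
theorem map_comp_multivariateGaussian {S : Matrix ι ι ℝ} (hS : S.PosSemidef) (f : κ → ι) :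
    (multivariateGaussian 0 S).map (fun x => toLp 2 (fun k => x (f k))) =
      multivariateGaussian 0 (S.submatrix f f) := by
  let L : EuclideanSpace ℝ ι →L[ℝ] EuclideanSpace ℝ κ :=
    LinearMap.toContinuousLinearMap
      { toFun := fun x => toLp 2 (fun k => x (f k))
        map_add' := fun x y => by ext; simp
        map_smul' := fun c x => by ext; simp }
  change (multivariateGaussian 0 S).map L = _
  apply IsGaussian.ext
  · simp only [id_eq, integral_id_multivariateGaussian]
    rw [ContinuousLinearMap.integral_id_map, integral_id_multivariateGaussian, map_zero]
    exact IsGaussian.integrable_id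
  rw [← ContinuousLinearMap.toBilinForm_inj]
  refine LinearMap.BilinForm.ext_basis (EuclideanSpace.basisFun κ ℝ).toBasis fun i j ↦ ?_
  rw [ContinuousLinearMap.toBilinForm_apply, ContinuousLinearMap.toBilinForm_apply,
    covarianceBilin_apply_eq_cov, covariance_map]
  · have (i : κ) : (fun u ↦ ⟪(EuclideanSpace.basisFun κ ℝ).toBasis i, u⟫) ∘
        L = fun u ↦ u (f i) := by ext; simp [PiLp.inner_apply, L]
    simp_rw [this, covariance_eval_multivariateGaussian hS,
      covarianceBilin_multivariateGaussian (hS.submatrix _)]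
    simp
  any_goals exact Measurable.aestronglyMeasurable (by fun_prop)
  · fun_prop
  · exact IsGaussian.memLp_two_id

/-- The marginals of a nondegenerate Gaussian: with `f = Sum.inl` or `f = Sum.inr`, the submatrix is
a diagonal block. -/
theorem map_comp_mvGaussian {S : Matrix ι ι ℝ} (hS : S.PosDef) {f : κ → ι}
    (hf : Function.Injective f) :
    (mvGaussian 0 S).map (fun x k => x (f k)) = mvGaussian 0 (S.submatrix f f) := by
  rw [mvGaussian_eq_map_ofLp hS, mvGaussian_eq_map_ofLp (hS.submatrix hf),
    ← map_comp_multivariateGaussian hS.posSemidef,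
    Measure.map_map (by fun_prop) (by fun_prop), Measure.map_map (by fun_prop) (by fun_prop)]
  rfl

theorem isProbabilityMeasure_mvGaussian {S : Matrix ι ι ℝ} (hS : S.PosDef) :
    IsProbabilityMeasure (mvGaussian 0 S) := by
  rw [mvGaussian_eq_map_sqrt hS]
  exact Measure.isProbabilityMeasure_map (measurable_mulVec _).aemeasurable

/-! ### Mean of the quadratic form -/

/-- After whitening, the quadratic form is a sum of `card ι` squares of standard Gaussians. -/
theorem quadForm_mvGaussian {S : Matrix ι ι ℝ} (hS : S.PosDef) :
    Integrable (fun x => x ⬝ᵥ (S⁻¹ *ᵥ x)) (mvGaussian 0 S) ∧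
      ∫ x, x ⬝ᵥ (S⁻¹ *ᵥ x) ∂(mvGaussian 0 S) = Fintype.card ι := by
  obtain ⟨hd, hs⟩ := sqrt_det_ne_zero_and_mul_transpose hS
  have hc : Continuous (fun x : ι → ℝ => x ⬝ᵥ (S⁻¹ *ᵥ x)) := by fun_prop
  have hq : ∀ x : ι → ℝ, (CFC.sqrt S *ᵥ x) ⬝ᵥ (S⁻¹ *ᵥ (CFC.sqrt S *ᵥ x)) = ∑ i, x i ^ 2 := by
    intro x
    have := quadForm_mulVec hd x
    rw [hs] at this
    rw [this]
    simp [dotProduct, pow_two]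
  have hi1 : Integrable (fun y : ℝ => y ^ 2) (gaussianReal 0 1) :=
    (memLp_id_gaussianReal 2).integrable_sq
  have hi : ∀ i : ι, Integrable (fun x : ι → ℝ => x i ^ 2)
      (Measure.pi (fun _ : ι => gaussianReal 0 1)) := fun i =>
    integrable_comp_eval (μ := fun _ : ι => gaussianReal 0 1) (f := fun y : ℝ => y ^ 2) hi1
  have hv : ∫ y, y ^ 2 ∂(gaussianReal 0 1) = 1 := by
    have := variance_id_gaussianReal (μ := 0) (v := 1)
    rw [variance_of_integral_eq_zero (by fun_prop) (by simp)] at this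
    simpa using this
  rw [mvGaussian_eq_map_sqrt hS]
  rw [integrable_map_measure hc.aestronglyMeasurable (measurable_mulVec _).aemeasurable,
    integral_map (measurable_mulVec _).aemeasurable hc.aestronglyMeasurable]
  simp only [Function.comp_def, hq]
  refine ⟨integrable_finsetSum _ fun i _ => hi i, ?_⟩
  rw [integral_finsetSum _ fun i _ => hi i]
  have : ∀ i : ι, ∫ x, x i ^ 2 ∂(Measure.pi (fun _ : ι => gaussianReal 0 1)) = 1 := fun i => by
    rw [integral_comp_eval (μ := fun _ : ι => gaussianReal 0 1) (f := fun y : ℝ => y ^ 2)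
      hi1.aestronglyMeasurable, hv]
  simp [this]
end

/-! ### Log-likelihood ratio and mutual information -/

/-- For measures with positive real densities `p`, `q` with respect to a common measure, the
Radon-Nikodym derivative is `p / q`. -/
theorem ac_and_rnDeriv_withDensity {α : Type*} [MeasurableSpace α] (μ : Measure α) {p q : α → ℝ}
    (hp : Measurable p) (hq : Measurable q) (hq0 : ∀ x, 0 < q x) (hp0 : ∀ x, 0 < p x)
    [SigmaFinite (μ.withDensity fun x => ENNReal.ofReal (q x))] :
    (μ.withDensity fun x => ENNReal.ofReal (p x)) ≪ (μ.withDensity fun x => ENNReal.ofReal (q x)) ∧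
    ∀ᵐ x ∂(μ.withDensity fun x => ENNReal.ofReal (p x)),
      ((μ.withDensity fun x => ENNReal.ofReal (p x)).rnDeriv
        (μ.withDensity fun x => ENNReal.ofReal (q x)) x).toReal = p x / q x := by
  have hm : Measurable fun x => ENNReal.ofReal (p x / q x) := (hp.div hq).ennreal_ofReal
  have h : (μ.withDensity fun x => ENNReal.ofReal (p x)) =
      (μ.withDensity fun x => ENNReal.ofReal (q x)).withDensity
        fun x => ENNReal.ofReal (p x / q x) := by
    rw [← withDensity_mul _ hq.ennreal_ofReal hm]
    congr 1
    ext x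
    rw [Pi.mul_apply, ← ENNReal.ofReal_mul (hq0 x).le, mul_div_cancel₀ _ (hq0 x).ne']
  rw [h]
  have hac := withDensity_absolutelyContinuous (μ.withDensity fun x => ENNReal.ofReal (q x))
    fun x => ENNReal.ofReal (p x / q x)
  refine ⟨hac, hac.ae_le ?_⟩
  filter_upwards [Measure.rnDeriv_withDensity
    (μ.withDensity fun x => ENNReal.ofReal (q x)) hm] with x hx
  rw [hx, ENNReal.toReal_ofReal (div_pos (hp0 x) (hq0 x)).le]

theorem log_gaussDens {ι : Type*} [Fintype ι] [DecidableEq ι] {S : Matrix ι ι ℝ}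
    (hS : 0 < S.det) (x : ι → ℝ) :
    Real.log (gaussDens S x) = -(1/2) * (Fintype.card ι * Real.log (2 * Real.pi))
      - 1/2 * Real.log S.det - 1/2 * (x ⬝ᵥ (S⁻¹ *ᵥ x)) := by
  have h : (0:ℝ) < (2 * Real.pi) ^ Fintype.card ι := by positivity
  rw [gaussDens, Real.log_mul (by positivity) (by positivity), Real.log_exp, Real.log_inv,
    Real.log_sqrt (by positivity), Real.log_mul h.ne' hS.ne', Real.log_pow]
  ring

/-- **Determinant formula for the mutual information of a jointly Gaussian vector**:
if `P = N(0, Σ)` is the centered Gaussian on `ℝ^{d_X} × ℝ^{d_Y}` with positive definite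
covariance `Σ`, whose diagonal blocks are `Σ_X` and `Σ_Y`, then
`I(P) = (1/2) · log(det Σ_X · det Σ_Y / det Σ)`. -/
theorem mutualInfo_gaussian_eq_half_log_det
    {dX dY : ℕ} (S : Matrix (Fin dX ⊕ Fin dY) (Fin dX ⊕ Fin dY) ℝ) (hS : S.PosDef) :
    mutualInfo ((mvGaussian 0 S).map (MeasurableEquiv.sumPiEquivProdPi fun _ => ℝ))
      = ((1/2 * Real.log (S.toBlocks₁₁.det * S.toBlocks₂₂.det / S.det) : ℝ) : EReal) := by
  set e := MeasurableEquiv.sumPiEquivProdPi (fun _ : Fin dX ⊕ Fin dY => ℝ) with he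
  have hX : S.toBlocks₁₁.PosDef := hS.submatrix Sum.inl_injective
  have hY : S.toBlocks₂₂.PosDef := hS.submatrix Sum.inr_injective
  set P := (mvGaussian 0 S).map e with hP
  have hP1 : P.map Prod.fst = mvGaussian 0 S.toBlocks₁₁ := by
    rw [hP, Measure.map_map measurable_fst e.measurable]
    exact map_comp_mvGaussian hS Sum.inl_injective
  have hP2 : P.map Prod.snd = mvGaussian 0 S.toBlocks₂₂ := by
    rw [hP, Measure.map_map measurable_snd e.measurable]
    exact map_comp_mvGaussian hS Sum.inr_injective
  have := isProbabilityMeasure_mvGaussian hS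
  have := isProbabilityMeasure_mvGaussian hX
  have := isProbabilityMeasure_mvGaussian hY
  have : IsProbabilityMeasure P := Measure.isProbabilityMeasure_map e.measurable.aemeasurable
  have hmS := (continuous_gaussDens S).measurable
  have hmX := (continuous_gaussDens S.toBlocks₁₁).measurable
  have hmY := (continuous_gaussDens S.toBlocks₂₂).measurable
  have hp : Measurable fun z => gaussDens S (e.symm z) := hmS.comp e.symm.measurable
  have hq : Measurable fun z : (Fin dX → ℝ) × (Fin dY → ℝ) =>
      gaussDens S.toBlocks₁₁ z.1 * gaussDens S.toBlocks₂₂ z.2 :=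
    (hmX.comp measurable_fst).mul (hmY.comp measurable_snd)
  have hPd : P = (volume : Measure ((Fin dX → ℝ) × (Fin dY → ℝ))).withDensity
      fun z => ENNReal.ofReal (gaussDens S (e.symm z)) := by
    have h1 := map_withDensity_comp volume e.measurable hp.ennreal_ofReal
    simp only [MeasurableEquiv.symm_apply_apply] at h1
    rw [hP, mvGaussian_eq, h1, (volume_measurePreserving_sumPiEquivProdPi _).map_eq]
  have hQd : (P.map Prod.fst).prod (P.map Prod.snd) =
      (volume : Measure ((Fin dX → ℝ) × (Fin dY → ℝ))).withDensity
      fun z => ENNReal.ofReal (gaussDens S.toBlocks₁₁ z.1 * gaussDens S.toBlocks₂₂ z.2) := by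
    rw [hP1, hP2, mvGaussian_eq, mvGaussian_eq,
      prod_withDensity hmX.ennreal_ofReal hmY.ennreal_ofReal]
    simp_rw [ENNReal.ofReal_mul (gaussDens_pos hX.det_pos _).le]
    rfl
  have hQp : SigmaFinite ((P.map Prod.fst).prod (P.map Prod.snd)) := by
    rw [hP1, hP2]; infer_instance
  rw [hQd] at hQp
  obtain ⟨hac, hrn⟩ := ac_and_rnDeriv_withDensity volume hp hq
    (fun z => mul_pos (gaussDens_pos hX.det_pos _) (gaussDens_pos hY.det_pos _))
    (fun z => gaussDens_pos hS.det_pos _)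
  rw [← hPd, ← hQd] at hac hrn
  set qS := fun z : (Fin dX → ℝ) × (Fin dY → ℝ) => e.symm z ⬝ᵥ (S⁻¹ *ᵥ e.symm z) with hqS
  set qX := fun z : (Fin dX → ℝ) × (Fin dY → ℝ) => z.1 ⬝ᵥ (S.toBlocks₁₁⁻¹ *ᵥ z.1) with hqX
  set qY := fun z : (Fin dX → ℝ) × (Fin dY → ℝ) => z.2 ⬝ᵥ (S.toBlocks₂₂⁻¹ *ᵥ z.2) with hqY
  set c := 1/2 * Real.log (S.toBlocks₁₁.det * S.toBlocks₂₂.det / S.det) with hc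
  have hlog : (fun z => Real.log (P.rnDeriv ((P.map Prod.fst).prod (P.map Prod.snd)) z).toReal)
      =ᵐ[P] fun z => c + 1/2 * (qX z + qY z - qS z) := by
    filter_upwards [hrn] with z hz
    rw [hz, Real.log_div (gaussDens_pos hS.det_pos _).ne'
      (mul_pos (gaussDens_pos hX.det_pos _) (gaussDens_pos hY.det_pos _)).ne',
      Real.log_mul (gaussDens_pos hX.det_pos _).ne' (gaussDens_pos hY.det_pos _).ne',
      log_gaussDens hS.det_pos, log_gaussDens hX.det_pos, log_gaussDens hY.det_pos, hc,
      Real.log_div (mul_pos hX.det_pos hY.det_pos).ne' hS.det_pos.ne',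
      Real.log_mul hX.det_pos.ne' hY.det_pos.ne']
    simp only [Fintype.card_sum, Nat.cast_add, hqS, hqX, hqY]
    ring
  obtain ⟨iS, vS⟩ := quadForm_mvGaussian hS
  obtain ⟨iX, vX⟩ := quadForm_mvGaussian hX
  obtain ⟨iY, vY⟩ := quadForm_mvGaussian hY
  rw [← hP1] at iX vX
  rw [← hP2] at iY vY
  have iqS : Integrable qS P := by
    rw [hP, integrable_map_equiv]
    simpa [hqS, Function.comp_def] using iS
  have iqX : Integrable qX P := iX.comp_measurable measurable_fst
  have iqY : Integrable qY P := iY.comp_measurable measurable_snd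
  have vqS : ∫ z, qS z ∂P = (dX : ℝ) + dY := by
    rw [hP, integral_map_equiv]
    simpa [hqS] using vS
  have vqX : ∫ z, qX z ∂P = dX := by
    rw [integral_map measurable_fst.aemeasurable iX.aestronglyMeasurable] at vX
    simpa using vX
  have vqY : ∫ z, qY z ∂P = dY := by
    rw [integral_map measurable_snd.aemeasurable iY.aestronglyMeasurable] at vY
    simpa using vY
  have iD : Integrable (fun z => 1/2 * (qX z + qY z - qS z)) P :=
    ((iqX.add iqY).sub iqS).const_mul _
  -- The quadratic forms have means `dX`, `dY` and `dX + dY`, so only the constant survives.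
  have vD : ∫ z, 1/2 * (qX z + qY z - qS z) ∂P = 0 := by
    have h1 : ∫ z, (qX z + qY z - qS z) ∂P = ∫ z, (qX z + qY z) ∂P - ∫ z, qS z ∂P :=
      integral_sub (iqX.add iqY) iqS
    have h2 : ∫ z, (qX z + qY z) ∂P = ∫ z, qX z ∂P + ∫ z, qY z ∂P := integral_add iqX iqY
    rw [integral_const_mul, h1, h2, vqS, vqX, vqY]
    ring
  have hint : Integrable
      (fun z => Real.log (P.rnDeriv ((P.map Prod.fst).prod (P.map Prod.snd)) z).toReal) P :=
    ((integrable_const c).add iD).congr hlog.symm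
  rw [mutualInfo, klDiv, if_pos ⟨hac, hint⟩, integral_congr_ae hlog,
    integral_add (integrable_const c) iD, vD]
  simp
end

section
/- Singular-value clipping is the Frobenius projection onto the spectral-norm unit ball (projection operator in Proposition 3.4): let A be a real m × n matrix with singular value decomposition A = U diag(σ₁, …, σ_r) Vᵀ, where U and V have orthonormal columns and σ_i ≥ 0. Let Ā := U diag(min(σ₁, 1), …, min(σ_r, 1)) Vᵀ. Then ‖Ā‖₂ ≤ 1, and for every real m × n matrix B with ‖B‖₂ ≤ 1 one has ‖Ā − A‖_F ≤ ‖B − A‖_F. -/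
/-!
The spectral unit ball is convex, so `Ā` is the nearest point of it to `A` once the obtuse-angle
inequality `⟨A - Ā, B - Ā⟩ ≤ 0` holds in the Frobenius inner product for all `B` in the ball.
Here `A - Ā = U diag(d) Vᵀ` with `d i = σ i - min (σ i) 1 ≥ 0`, so
`⟨A - Ā, X⟩ = ∑ i, d i * (Uᵀ X V) i i` (`frob_inner_svd`). For `X = B` the diagonal entries are at
most `‖Uᵀ B V‖₂ ≤ 1` (`diag_entry_le_one`), while for `X = Ā` they are `min (σ i) 1`, which is `1`
whenever `d i ≠ 0`. The bound `‖Ā‖₂ ≤ 1` is submultiplicativity of the spectral norm.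
-/

open Matrix

/-- The spectral norm of a real rectangular matrix: the `ℓ² → ℓ²` operator norm
of the associated linear map between Euclidean spaces. -/
noncomputable def specNorm {m n : ℕ} (M : Matrix (Fin m) (Fin n) ℝ) : ℝ :=
  ‖LinearMap.toContinuousLinearMap (Matrix.toEuclideanLin M)‖

/-- The Frobenius norm of a real matrix: the square root of the sum of squared entries. -/
noncomputable def frobNorm {m n : ℕ} (M : Matrix (Fin m) (Fin n) ℝ) : ℝ :=
  Real.sqrt (∑ i, ∑ j, (M i j) ^ 2)

open scoped Matrix.Norms.L2Operator

lemma specNorm_eq_l2_opNorm {m n : ℕ} (M : Matrix (Fin m) (Fin n) ℝ) : specNorm M = ‖M‖ := rfl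

lemma l2_opNorm_le_one_of_orthonormal_columns {m r : ℕ} (U : Matrix (Fin m) (Fin r) ℝ)
    (hU : Uᵀ * U = 1) : ‖U‖ ≤ 1 := by
  have h := Matrix.l2_opNorm_conjTranspose_mul_self U
  rw [Matrix.conjTranspose_eq_transpose_of_trivial, hU, ← Matrix.diagonal_one,
    Matrix.l2_opNorm_diagonal] at h
  have h1 : ‖(fun _ : Fin r => (1 : ℝ))‖ ≤ 1 :=
    (pi_norm_le_iff_of_nonneg zero_le_one).2 fun _ => by simp
  nlinarith [norm_nonneg U]

lemma l2_opNorm_transpose {m n : ℕ} (M : Matrix (Fin m) (Fin n) ℝ) : ‖Mᵀ‖ = ‖M‖ := by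
  rw [← Matrix.conjTranspose_eq_transpose_of_trivial, Matrix.l2_opNorm_conjTranspose]

lemma l2_opNorm_mul_mul_le_one {k l m n : ℕ} (X : Matrix (Fin k) (Fin l) ℝ)
    (Y : Matrix (Fin l) (Fin m) ℝ) (Z : Matrix (Fin m) (Fin n) ℝ)
    (hX : ‖X‖ ≤ 1) (hY : ‖Y‖ ≤ 1) (hZ : ‖Z‖ ≤ 1) : ‖X * Y * Z‖ ≤ 1 :=
  (Matrix.l2_opNorm_mul _ _).trans <| mul_le_one₀
    ((Matrix.l2_opNorm_mul _ _).trans (mul_le_one₀ hX (norm_nonneg _) hY)) (norm_nonneg _) hZ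

lemma diag_entry_le_one {r : ℕ} (M : Matrix (Fin r) (Fin r) ℝ) (hM : ‖M‖ ≤ 1) (i : Fin r) :
    M i i ≤ 1 := by
  have h := Matrix.l2_opNorm_mulVec M (EuclideanSpace.single i (1 : ℝ))
  have h2 := PiLp.norm_apply_le (WithLp.toLp 2 (M *ᵥ (EuclideanSpace.single i (1 : ℝ)).ofLp)) i
  simp at h h2
  exact (le_abs_self _).trans (h2.trans (h.trans hM))

/-- The Frobenius inner product against `U diag(d) Vᵀ` only sees the diagonal of `Uᵀ X V`. -/
lemma frob_inner_svd {m n r : ℕ} (U : Matrix (Fin m) (Fin r) ℝ) (V : Matrix (Fin n) (Fin r) ℝ)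
    (d : Fin r → ℝ) (X : Matrix (Fin m) (Fin n) ℝ) :
    ∑ i, ∑ j, (U * Matrix.diagonal d * Vᵀ) i j * X i j = ∑ k, d k * (Uᵀ * X * V) k k := by
  have h : ∑ i, ∑ j, (U * Matrix.diagonal d * Vᵀ) i j * X i j
      = Matrix.trace ((U * Matrix.diagonal d * Vᵀ)ᵀ * X) := by
    simp only [Matrix.trace, Matrix.diag, Matrix.mul_apply (M := (_)ᵀ), Matrix.transpose_apply]
    exact Finset.sum_comm
  have h2 : (U * Matrix.diagonal d * Vᵀ)ᵀ * X = V * (Matrix.diagonal d * (Uᵀ * X)) := by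
    simp [Matrix.transpose_mul, Matrix.mul_assoc]
  rw [h, h2, Matrix.trace_mul_comm, Matrix.mul_assoc]
  simp [Matrix.trace, Matrix.diagonal_mul]

/-- **Singular-value clipping is the Frobenius projection onto the spectral-norm unit
ball** (projection operator in Proposition 3.4): if `A = U diag(σ) Vᵀ` with `U, V` having
orthonormal columns and `σ ≥ 0`, then `Ā = U diag(min σ 1) Vᵀ` satisfies `‖Ā‖₂ ≤ 1` and
`‖Ā − A‖_F ≤ ‖B − A‖_F` for every `B` with `‖B‖₂ ≤ 1`. -/
theorem svd_clipping_is_frobenius_projection {m n r : ℕ}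
    (U : Matrix (Fin m) (Fin r) ℝ) (V : Matrix (Fin n) (Fin r) ℝ)
    (hU : Uᵀ * U = 1) (hV : Vᵀ * V = 1)
    (σ : Fin r → ℝ) (hσ : ∀ i, 0 ≤ σ i)
    (A : Matrix (Fin m) (Fin n) ℝ) (hA : A = U * Matrix.diagonal σ * Vᵀ)
    (Abar : Matrix (Fin m) (Fin n) ℝ)
    (hAbar : Abar = U * Matrix.diagonal (fun i => min (σ i) 1) * Vᵀ) :
    specNorm Abar ≤ 1 ∧
      ∀ B : Matrix (Fin m) (Fin n) ℝ, specNorm B ≤ 1 →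
        frobNorm (Abar - A) ≤ frobNorm (B - A) := by
  have hU1 := l2_opNorm_le_one_of_orthonormal_columns U hU
  have hV1 := l2_opNorm_le_one_of_orthonormal_columns V hV
  refine ⟨?_, fun B hB => ?_⟩
  · rw [specNorm_eq_l2_opNorm, hAbar]
    refine l2_opNorm_mul_mul_le_one _ _ _ hU1 ?_ ((l2_opNorm_transpose V).trans_le hV1)
    rw [Matrix.l2_opNorm_diagonal]
    refine (pi_norm_le_iff_of_nonneg zero_le_one).2 fun i => ?_
    rw [Real.norm_of_nonneg (le_min (hσ i) zero_le_one)]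
    exact min_le_right _ _
  · rw [specNorm_eq_l2_opNorm] at hB
    have hD : A - Abar = U * Matrix.diagonal (fun i => σ i - min (σ i) 1) * Vᵀ := by
      rw [hA, hAbar, ← Matrix.sub_mul, ← Matrix.mul_sub, Matrix.diagonal_sub]
    have hUBV : ‖Uᵀ * B * V‖ ≤ 1 :=
      l2_opNorm_mul_mul_le_one _ _ _ ((l2_opNorm_transpose U).trans_le hU1) hB hV1
    have hUAV : Uᵀ * Abar * V = Matrix.diagonal (fun i => min (σ i) 1) := by
      calc Uᵀ * Abar * V
          = (Uᵀ * U) * Matrix.diagonal (fun i => min (σ i) 1) * (Vᵀ * V) := by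
            simp only [hAbar, Matrix.mul_assoc]
        _ = _ := by rw [hU, hV, Matrix.one_mul, Matrix.mul_one]
    have hinner : ∑ i, ∑ j, (A - Abar) i j * (B - Abar) i j ≤ 0 := by
      rw [hD, frob_inner_svd]
      refine Finset.sum_nonpos fun k _ => ?_
      rw [Matrix.mul_sub, Matrix.sub_mul, hUAV, Matrix.sub_apply, Matrix.diagonal_apply_eq]
      have hk := diag_entry_le_one _ hUBV k
      rcases le_total (σ k) 1 with h | h
      · simp [min_eq_left h]
      · rw [min_eq_right h]
        exact mul_nonpos_of_nonneg_of_nonpos (by linarith) (by linarith)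
    refine Real.sqrt_le_sqrt ?_
    -- Entrywise, `(B - A)² = (Ā - A)² - 2 (A - Ā)(B - Ā) + (B - Ā)²`.
    have hexp : ∑ i, ∑ j, ((B - A) i j) ^ 2 = ∑ i, ∑ j, ((Abar - A) i j) ^ 2
        - 2 * (∑ i, ∑ j, (A - Abar) i j * (B - Abar) i j) + ∑ i, ∑ j, ((B - Abar) i j) ^ 2 := by
      simp only [Finset.mul_sum, ← Finset.sum_sub_distrib, ← Finset.sum_add_distrib,
        Matrix.sub_apply]
      exact Finset.sum_congr rfl fun i _ => Finset.sum_congr rfl fun j _ => by ring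
    have hsq : 0 ≤ ∑ i, ∑ j, ((B - Abar) i j) ^ 2 :=
      Finset.sum_nonneg fun i _ => Finset.sum_nonneg fun j _ => sq_nonneg _
    linarith
end

section
/- Gradient of the Thin-PID objective (Proposition 3.4): let C be a positive semidefinite real (d₁ + d₂) × (d₁ + d₂) matrix (C = H Σ_Y Hᵀ in the Thin-PID setting), and for a real d₁ × d₂ matrix M with ‖M‖₂ < 1 let Σ(M) := fromBlocks I_{d₁} M Mᵀ I_{d₂} and L(M) := log det(C + Σ(M)) − log det Σ(M). Write G := C + Σ(M) in block form with blocks G₁₁ (d₁ × d₁), G₁₂ (d₁ × d₂), G₂₂ (d₂ × d₂), and let B := G₂₂ − G₁₂ᵀ G₁₁⁻¹ G₁₂. Then L is differentiable at M and, for every direction E ∈ ℝ^{d₁ × d₂}, the directional derivative of L at M along E equals 2 · trace( Eᵀ ( −G₁₁⁻¹ G₁₂ B⁻¹ + M (I_{d₂} − Mᵀ M)⁻¹ ) ); that is, up to the factor 2 from symmetry, the gradient of L with respect to M is ∇L(M) = −G₁₁⁻¹ G₁₂ B⁻¹ + M (I_{d₂} − Mᵀ M)⁻¹. -/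
/-!
`Σ(M)` is positive definite when `‖M‖₂ < 1`: its quadratic form at `(u, v)` is
`‖u‖² + ‖v‖² + 2 ⟨M v, u⟩`, which Cauchy–Schwarz bounds below by a positive multiple of
`‖u‖² + ‖v‖²` (`posDef_SigmaM`). Hence `G = C + Σ(M)` is positive definite as well.

At an invertible matrix `A` the derivative of `log det` along `E` is `trace (A⁻¹ E)` (Jacobi's
formula, `hasFDerivAt_logdet`). Since `M ↦ C + Σ(M)` is affine with linear part
`E ↦ fromBlocks 0 E Eᵀ 0`, the chain rule gives the derivative
`trace (G⁻¹ fromBlocks 0 E Eᵀ 0)`, in which the two off-diagonal blocks of the symmetric matrix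
`G⁻¹` contribute equally; by the Schur complement formula the upper right one is
`-G₁₁⁻¹ G₁₂ B⁻¹` (`trace_inv_mul_sigmaLin`). The second term of `L` is the first one with `C = 0`,
so `hasFDerivAt_logdet_add_SigmaM` is applied once to `C` and once to `0`.
-/

open Matrix

attribute [local instance] Matrix.normedAddCommGroup Matrix.normedSpace

/-- The whitened joint noise covariance `Σ(M) = fromBlocks I M Mᵀ I`. -/
noncomputable def SigmaM {d₁ d₂ : ℕ} (M : Matrix (Fin d₁) (Fin d₂) ℝ) :
    Matrix (Fin d₁ ⊕ Fin d₂) (Fin d₁ ⊕ Fin d₂) ℝ :=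
  fromBlocks 1 M Mᵀ 1

/-- The Thin-PID objective `L(M) = log det (C + Σ(M)) − log det Σ(M)`. -/
noncomputable def thinPIDObjective {d₁ d₂ : ℕ}
    (C : Matrix (Fin d₁ ⊕ Fin d₂) (Fin d₁ ⊕ Fin d₂) ℝ)
    (M : Matrix (Fin d₁) (Fin d₂) ℝ) : ℝ :=
  Real.log (C + SigmaM M).det - Real.log (SigmaM M).det

/-- The matrix `G = C + Σ(M)`. -/
noncomputable def Gmat {d₁ d₂ : ℕ}
    (C : Matrix (Fin d₁ ⊕ Fin d₂) (Fin d₁ ⊕ Fin d₂) ℝ)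
    (M : Matrix (Fin d₁) (Fin d₂) ℝ) :
    Matrix (Fin d₁ ⊕ Fin d₂) (Fin d₁ ⊕ Fin d₂) ℝ :=
  C + SigmaM M

/-- The Schur complement `B = G₂₂ − G₁₂ᵀ G₁₁⁻¹ G₁₂` of the block `G₁₁` of `G = C + Σ(M)`. -/
noncomputable def schurB {d₁ d₂ : ℕ}
    (C : Matrix (Fin d₁ ⊕ Fin d₂) (Fin d₁ ⊕ Fin d₂) ℝ)
    (M : Matrix (Fin d₁) (Fin d₂) ℝ) : Matrix (Fin d₂) (Fin d₂) ℝ :=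
  (Gmat C M).toBlocks₂₂
    - (Gmat C M).toBlocks₁₂ᵀ * (Gmat C M).toBlocks₁₁⁻¹ * (Gmat C M).toBlocks₁₂

lemma differentiable_det {n : Type*} [Fintype n] [DecidableEq n] :
    Differentiable ℝ (fun A : Matrix n n ℝ => A.det) := by
  have h (i j : n) : Differentiable ℝ (fun A : Matrix n n ℝ => A i j) :=
    (LinearMap.toContinuousLinearMap (Matrix.entryLinearMap ℝ ℝ i j)).differentiable
  simp only [Matrix.det_apply, Units.smul_def, zsmul_eq_mul]
  fun_prop

lemma hasDerivAt_det_one_add_smul {n : Type*} [Fintype n] [DecidableEq n] (A : Matrix n n ℝ) :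
    HasDerivAt (fun t : ℝ => (1 + t • A).det) A.trace 0 := by
  rw [funext fun t : ℝ => Matrix.det_one_add_smul t A]
  generalize (1 + (Polynomial.X : Polynomial ℝ) • A.map Polynomial.C).det.divX.divX = p
  have h := (((hasDerivAt_id (0 : ℝ)).const_mul A.trace).const_add 1).add
    ((p.hasDerivAt 0).mul (hasDerivAt_pow 2 (0 : ℝ)))
  refine (h.congr_deriv ?_)
  simp

/-- Jacobi's formula for `log det`. The derivative exists since `det` is a polynomial in the entries;
its value along `E` is read off the line `det (A + t E) = det A * det (1 + t A⁻¹ E)`. -/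
lemma hasFDerivAt_logdet {n : Type*} [Fintype n] [DecidableEq n] (A : Matrix n n ℝ)
    (hA : A.det ≠ 0) :
    ∃ L' : Matrix n n ℝ →L[ℝ] ℝ, HasFDerivAt (fun A : Matrix n n ℝ => Real.log A.det) L' A ∧
      ∀ E, L' E = (A⁻¹ * E).trace := by
  have hd : HasFDerivAt (fun A : Matrix n n ℝ => Real.log A.det) _ A :=
    ((differentiable_det A).log hA).hasFDerivAt
  refine ⟨_, hd, fun E => ?_⟩
  have h1 : HasDerivAt (fun t : ℝ => A + t • E) E 0 := by
    have h := ((hasDerivAt_id (0 : ℝ)).smul_const E).const_add A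
    exact h.congr_deriv (one_smul ℝ E)
  have h2 := HasFDerivAt.comp_hasDerivAt_of_eq (0 : ℝ) hd h1 (by simp)
  have h3 := ((hasDerivAt_det_one_add_smul (A⁻¹ * E)).const_mul A.det).log (by simpa using hA)
  have h4 : (fun t : ℝ => Real.log (A.det * (1 + t • (A⁻¹ * E)).det))
      = (fun A : Matrix n n ℝ => Real.log A.det) ∘ fun t : ℝ => A + t • E := by
    funext t
    simp only [Function.comp, ← Matrix.det_mul, Matrix.mul_add, Matrix.mul_one, Matrix.mul_smul,
      Matrix.mul_nonsing_inv_cancel_left A E (isUnit_iff_ne_zero.mpr hA)]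
  rw [h4] at h3
  refine (h2.unique h3).trans ?_
  simp [hA]

lemma posDef_SigmaM {d₁ d₂ : ℕ} (M : Matrix (Fin d₁) (Fin d₂) ℝ) (hM : specNorm M < 1) :
    (SigmaM M).PosDef := by
  refine Matrix.PosDef.of_dotProduct_mulVec_pos ?_ fun x hx => ?_
  · simp [SigmaM, Matrix.IsHermitian, Matrix.conjTranspose_eq_transpose_of_trivial,
      fromBlocks_transpose]
  obtain ⟨u, v, rfl⟩ : ∃ u v, x = Sum.elim u v := ⟨_, _, (Sum.elim_comp_inl_inr x).symm⟩
  have hexp : star (Sum.elim u v) ⬝ᵥ (SigmaM M) *ᵥ Sum.elim u v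
      = u ⬝ᵥ u + v ⬝ᵥ v + 2 * (u ⬝ᵥ M *ᵥ v) := by
    have : v ⬝ᵥ Mᵀ *ᵥ u = u ⬝ᵥ M *ᵥ v := by
      rw [Matrix.mulVec_transpose, dotProduct_comm, ← Matrix.dotProduct_mulVec]
    simp [SigmaM, fromBlocks_mulVec, this]
    ring
  rw [hexp]
  set U : EuclideanSpace ℝ (Fin d₁) := WithLp.toLp 2 u
  set V : EuclideanSpace ℝ (Fin d₂) := WithLp.toLp 2 v
  have hU : u ⬝ᵥ u = ‖U‖ ^ 2 := by
    rw [EuclideanSpace.real_norm_sq_eq]; simp [dotProduct, U, sq]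
  have hV : v ⬝ᵥ v = ‖V‖ ^ 2 := by
    rw [EuclideanSpace.real_norm_sq_eq]; simp [dotProduct, V, sq]
  have hi : u ⬝ᵥ M *ᵥ v = inner ℝ (Matrix.toEuclideanLin M V) U := by
    simp [U, V, EuclideanSpace.inner_eq_star_dotProduct]
  have hb : ‖Matrix.toEuclideanLin M V‖ ≤ specNorm M * ‖V‖ :=
    (LinearMap.toContinuousLinearMap (Matrix.toEuclideanLin M)).le_opNorm V
  have hc := (abs_le.mp (abs_real_inner_le_norm (Matrix.toEuclideanLin M V) U)).1
  have hprod : ‖Matrix.toEuclideanLin M V‖ * ‖U‖ ≤ specNorm M * ‖V‖ * ‖U‖ := by gcongr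
  have hne : 0 < ‖U‖ ∨ 0 < ‖V‖ := by
    by_contra! h
    refine hx ?_
    have h1 : U = 0 := norm_le_zero_iff.mp h.1
    have h2 : V = 0 := norm_le_zero_iff.mp h.2
    have h1' : u = 0 := by simpa [U] using h1
    have h2' : v = 0 := by simpa [V] using h2
    subst h1' h2'
    simp
  rw [hU, hV, hi]
  have h0 : 0 ≤ specNorm M := norm_nonneg _
  have hs : 0 < ‖U‖ ^ 2 + ‖V‖ ^ 2 := by
    rcases hne with h | h <;> positivity
  -- With `s = specNorm M`, the form is at least `‖U‖² + ‖V‖² - 2 s ‖U‖ ‖V‖`, which equals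
  -- `(1 - s) (‖U‖² + ‖V‖²) + s (‖U‖ - ‖V‖)²`.
  nlinarith [mul_nonneg h0 (sq_nonneg (‖U‖ - ‖V‖))]

/-- The linear part of the affine map `M ↦ Σ(M)`. -/
noncomputable def sigmaLin (d₁ d₂ : ℕ) : Matrix (Fin d₁) (Fin d₂) ℝ →L[ℝ]
    Matrix (Fin d₁ ⊕ Fin d₂) (Fin d₁ ⊕ Fin d₂) ℝ :=
  LinearMap.toContinuousLinearMap
    { toFun := fun E => fromBlocks 0 E Eᵀ 0
      map_add' := by intro x y; simp [fromBlocks_add]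
      map_smul' := by intro c x; simp [fromBlocks_smul] }

lemma trace_blocks {d₁ d₂ : ℕ} (A : Matrix (Fin d₁) (Fin d₁) ℝ) (B : Matrix (Fin d₁) (Fin d₂) ℝ)
    (C : Matrix (Fin d₂) (Fin d₁) ℝ) (D : Matrix (Fin d₂) (Fin d₂) ℝ) :
    (fromBlocks A B C D).trace = A.trace + D.trace := by
  simp [Matrix.trace]

/-- Only the off-diagonal blocks of the inverse enter the trace; they are
`-A⁻¹ B S⁻¹` and its transpose, where `S` is the Schur complement of `A`. -/
lemma trace_inv_mul_sigmaLin {d₁ d₂ : ℕ} (A : Matrix (Fin d₁) (Fin d₁) ℝ)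
    (B : Matrix (Fin d₁) (Fin d₂) ℝ) (D : Matrix (Fin d₂) (Fin d₂) ℝ)
    (hG : (fromBlocks A B Bᵀ D).PosDef) (E : Matrix (Fin d₁) (Fin d₂) ℝ) :
    ((fromBlocks A B Bᵀ D)⁻¹ * fromBlocks 0 E Eᵀ 0).trace
      = -(2 * (Eᵀ * (A⁻¹ * B * (D - Bᵀ * A⁻¹ * B)⁻¹)).trace) := by
  have hA : A.PosDef := hG.submatrix (e := Sum.inl) Sum.inl_injective
  have hD : D.PosDef := hG.submatrix (e := Sum.inr) Sum.inr_injective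
  have hAs : Aᵀ = A := by
    simpa [Matrix.conjTranspose_eq_transpose_of_trivial] using hA.isHermitian.eq
  have hDs : Dᵀ = D := by
    simpa [Matrix.conjTranspose_eq_transpose_of_trivial] using hD.isHermitian.eq
  let := hA.isUnit.invertible
  let := hG.isUnit.invertible
  let := invertibleOfFromBlocks₁₁Invertible A B Bᵀ D
  rw [← Matrix.invOf_eq_nonsing_inv (fromBlocks A B Bᵀ D), invOf_fromBlocks₁₁_eq]
  simp only [Matrix.invOf_eq_nonsing_inv, fromBlocks_multiply, trace_blocks]
  set S := D - Bᵀ * A⁻¹ * B with hS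
  have hSs : Sᵀ = S := by
    simp [hS, Matrix.transpose_nonsing_inv, hAs, hDs, Matrix.mul_assoc]
  have h1 : (S⁻¹ * Bᵀ * A⁻¹ * E).trace = (Eᵀ * (A⁻¹ * B * S⁻¹)).trace := by
    rw [← Matrix.trace_transpose]
    simp [Matrix.transpose_mul, Matrix.transpose_nonsing_inv, hAs, hSs, Matrix.mul_assoc]
  have h2 : (A⁻¹ * B * S⁻¹ * Eᵀ).trace = (Eᵀ * (A⁻¹ * B * S⁻¹)).trace := Matrix.trace_mul_comm _ _
  simp [h1, h2]
  ring

/-- The derivative of `M ↦ log det (C + Σ(M))`, which for `C = 0` also covers `log det Σ(M)`. -/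
lemma hasFDerivAt_logdet_add_SigmaM {d₁ d₂ : ℕ}
    (C : Matrix (Fin d₁ ⊕ Fin d₂) (Fin d₁ ⊕ Fin d₂) ℝ) (hC : C.PosSemidef)
    (M : Matrix (Fin d₁) (Fin d₂) ℝ) (hM : specNorm M < 1) :
    ∃ L' : Matrix (Fin d₁) (Fin d₂) ℝ →L[ℝ] ℝ,
      HasFDerivAt (fun M => Real.log (C + SigmaM M).det) L' M ∧
        ∀ E : Matrix (Fin d₁) (Fin d₂) ℝ,
          L' E = -(2 * (Eᵀ * ((Gmat C M).toBlocks₁₁⁻¹ * (Gmat C M).toBlocks₁₂ *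
            (schurB C M)⁻¹)).trace) := by
  have hG : (Gmat C M).PosDef := Matrix.PosDef.posSemidef_add hC (posDef_SigmaM M hM)
  obtain ⟨L, hL, hLE⟩ := hasFDerivAt_logdet (Gmat C M) hG.det_pos.ne'
  have haff : HasFDerivAt (fun N : Matrix (Fin d₁) (Fin d₂) ℝ => C + SigmaM N)
      (sigmaLin d₁ d₂) M := by
    have h := ((sigmaLin d₁ d₂).hasFDerivAt (x := M)).const_add (C + fromBlocks 1 0 0 1)
    refine h.congr_of_eventuallyEq (Filter.Eventually.of_forall fun N => ?_)
    change C + fromBlocks 1 N Nᵀ 1 = C + fromBlocks 1 0 0 1 + fromBlocks 0 N Nᵀ 0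
    simp [add_assoc, fromBlocks_add, -fromBlocks_one]
  refine ⟨L.comp (sigmaLin d₁ d₂), HasFDerivAt.comp M hL haff, fun E => ?_⟩
  have h21 : (Gmat C M).toBlocks₂₁ = (Gmat C M).toBlocks₁₂ᵀ := by
    ext i j
    simpa [toBlocks₂₁, toBlocks₁₂] using (hG.isHermitian.apply (Sum.inr i) (Sum.inl j)).symm
  have hblk : fromBlocks (Gmat C M).toBlocks₁₁ (Gmat C M).toBlocks₁₂ (Gmat C M).toBlocks₁₂ᵀ
      (Gmat C M).toBlocks₂₂ = Gmat C M := by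
    rw [← h21, fromBlocks_toBlocks]
  have key := trace_inv_mul_sigmaLin (Gmat C M).toBlocks₁₁ (Gmat C M).toBlocks₁₂
    (Gmat C M).toBlocks₂₂ (by rwa [hblk]) E
  rw [hblk] at key
  exact (hLE _).trans key

/-- **Gradient of the Thin-PID objective** (Proposition 3.4): for `C` positive semidefinite
and `‖M‖₂ < 1`, the objective `L(M) = log det (C + Σ(M)) − log det Σ(M)` is differentiable
at `M`, and its directional derivative along `E` is
`2 · trace (Eᵀ (−G₁₁⁻¹ G₁₂ B⁻¹ + M (I − MᵀM)⁻¹))`. -/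
theorem thinPID_gradient {d₁ d₂ : ℕ}
    (C : Matrix (Fin d₁ ⊕ Fin d₂) (Fin d₁ ⊕ Fin d₂) ℝ) (hC : C.PosSemidef)
    (M : Matrix (Fin d₁) (Fin d₂) ℝ) (hM : specNorm M < 1) :
    ∃ L' : Matrix (Fin d₁) (Fin d₂) ℝ →L[ℝ] ℝ,
      HasFDerivAt (thinPIDObjective C) L' M ∧
        ∀ E : Matrix (Fin d₁) (Fin d₂) ℝ,
          L' E = 2 * (Eᵀ *
            (-((Gmat C M).toBlocks₁₁⁻¹ * (Gmat C M).toBlocks₁₂ * (schurB C M)⁻¹)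
              + M * ((1 : Matrix (Fin d₂) (Fin d₂) ℝ) - Mᵀ * M)⁻¹)).trace := by
  obtain ⟨L₁, h₁, e₁⟩ := hasFDerivAt_logdet_add_SigmaM C hC M hM
  obtain ⟨L₂, h₂, e₂⟩ := hasFDerivAt_logdet_add_SigmaM 0 Matrix.PosSemidef.zero M hM
  simp only [zero_add] at h₂
  refine ⟨L₁ - L₂, h₁.sub h₂, fun E => ?_⟩
  -- For `C = 0` the blocks of `G` are those of `Σ(M)`, with Schur complement `I - Mᵀ M`.
  have hB : schurB 0 M = 1 - Mᵀ * M := by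
    simp [schurB, Gmat, SigmaM]
  have h11 : (Gmat 0 M).toBlocks₁₁ = 1 := by simp [Gmat, SigmaM]
  have h12 : (Gmat 0 M).toBlocks₁₂ = M := by simp [Gmat, SigmaM]
  rw [_root_.sub_apply, e₁, e₂, hB, h11, h12, Matrix.mul_add, Matrix.trace_add,
    Matrix.mul_neg, Matrix.trace_neg, inv_one, Matrix.one_mul]
  ring
end
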